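/- arXiv:1511.01075 — 2 statements merged into one kernel-verified Lean document; each statement's English description precedes it below -/
import Mathlib

section
/- Let 𝔽 be an infinite field of characteristic p with 0 < p ≤ n and p ≠ 2, and let d ≥ 1. Then every set S of homogeneous elements that generates R₊^{O(n)} as an 𝔽-algebra contains an element of degree at least d. In particular, the maximal degree D(R₊^{O(n)}) of elements in a minimal homogeneous system of generators of R₊^{O(n)} tends to infinity as d tends to infinity. -/
open Matrix
noncomputable section

/-- The polynomial ring `R = 𝔽[x_{ij}(k)]` in `n² d` variables. -/
abbrev Rpoly (𝔽 : Type) [Field 𝔽] (n d : ℕ) : Type :=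
  MvPolynomial (Fin n × Fin n × Fin d) 𝔽

/-- The generic matrix `X_k` with `(X_k)_{ij} = x_{ij}(k)`. -/
def Xgen (𝔽 : Type) [Field 𝔽] (n d : ℕ) (k : Fin d) :
    Matrix (Fin n) (Fin n) (Rpoly 𝔽 n d) :=
  fun i j => MvPolynomial.X (i, j, k)

/-- The symmetric generic matrix `X_k⁺`. -/
def XgenSym (𝔽 : Type) [Field 𝔽] (n d : ℕ) (k : Fin d) :
    Matrix (Fin n) (Fin n) (Rpoly 𝔽 n d) :=
  fun i j => if j ≤ i then MvPolynomial.X (i, j, k) else MvPolynomial.X (j, i, k)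

/-- The skew-symmetric generic matrix `X_k⁻`. -/
def XgenSkew (𝔽 : Type) [Field 𝔽] (n d : ℕ) (k : Fin d) :
    Matrix (Fin n) (Fin n) (Rpoly 𝔽 n d) :=
  fun i j =>
    if j < i then MvPolynomial.X (i, j, k)
    else if i < j then - MvPolynomial.X (j, i, k)
    else 0

/-- `σ_t(A)`, the `t`-th coefficient of the characteristic polynomial of `A`
(so `σ₁ = tr`, `σ_n = det`). -/
def sigmaCoeff {𝔽 : Type} [Field 𝔽] {n d : ℕ} (t : ℕ)
    (A : Matrix (Fin n) (Fin n) (Rpoly 𝔽 n d)) : Rpoly 𝔽 n d :=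
  (-1) ^ t * A.charpoly.coeff (n - t)

/-- The algebra `R^{O(n)}` of matrix `O(n)`-invariants: generated by all `σ_t(A)`,
`1 ≤ t ≤ n`, where `A` is a nonempty product of generic and transposed generic matrices. -/
def invO (𝔽 : Type) [Field 𝔽] (n d : ℕ) : Subalgebra 𝔽 (Rpoly 𝔽 n d) :=
  Algebra.adjoin 𝔽
    {f | ∃ t, 1 ≤ t ∧ t ≤ n ∧
      ∃ w : List (Matrix (Fin n) (Fin n) (Rpoly 𝔽 n d)), w ≠ [] ∧
        (∀ m ∈ w, (∃ k, m = Xgen 𝔽 n d k) ∨ (∃ k, m = (Xgen 𝔽 n d k)ᵀ)) ∧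
        f = sigmaCoeff t w.prod}

/-- The algebra `R₊^{O(n)}`, generated by all `σ_t(A)` for `A` a nonempty product of
symmetric generic matrices. -/
def invOplus (𝔽 : Type) [Field 𝔽] (n d : ℕ) : Subalgebra 𝔽 (Rpoly 𝔽 n d) :=
  Algebra.adjoin 𝔽
    {f | ∃ t, 1 ≤ t ∧ t ≤ n ∧
      ∃ w : List (Matrix (Fin n) (Fin n) (Rpoly 𝔽 n d)), w ≠ [] ∧
        (∀ m ∈ w, ∃ k, m = XgenSym 𝔽 n d k) ∧
        f = sigmaCoeff t w.prod}

/-- The algebra `R₋^{O(n)}`, generated by all `σ_t(A)` for `A` a nonempty product of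
skew-symmetric generic matrices. -/
def invOminus (𝔽 : Type) [Field 𝔽] (n d : ℕ) : Subalgebra 𝔽 (Rpoly 𝔽 n d) :=
  Algebra.adjoin 𝔽
    {f | ∃ t, 1 ≤ t ∧ t ≤ n ∧
      ∃ w : List (Matrix (Fin n) (Fin n) (Rpoly 𝔽 n d)), w ≠ [] ∧
        (∀ m ∈ w, ∃ k, m = XgenSkew 𝔽 n d k) ∧
        f = sigmaCoeff t w.prod}

/-- `f` is decomposable in the subalgebra `A`: it lies in the `𝔽`-span of products `g·h`
with `g, h ∈ A` homogeneous of positive degree. -/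
def Decomposable (𝔽 : Type) [Field 𝔽] {n d : ℕ} (A : Subalgebra 𝔽 (Rpoly 𝔽 n d))
    (f : Rpoly 𝔽 n d) : Prop :=
  f ∈ Submodule.span 𝔽
    {x : Rpoly 𝔽 n d | ∃ g ∈ A, ∃ h ∈ A,
      (∃ i, 0 < i ∧ MvPolynomial.IsHomogeneous g i) ∧
      (∃ j, 0 < j ∧ MvPolynomial.IsHomogeneous h j) ∧ x = g * h}

/-!
Let `p` be the characteristic. Specialize `X_z⁺` to `y_z E₁₁` for one index `z` and every other
`X_k⁺` to `y_k (E₁₁ + ⋯ + E_pp)`. A word `w` with commutative image `y_w` becomes `y_w E₁₁` if it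
contains `X_z⁺` and `y_w (E₁₁ + ⋯ + E_pp)` otherwise. In the second case its characteristic
polynomial is `X ^ (n - p) * (X - y_w) ^ p = X ^ n - y_w ^ p * X ^ (n - p)`, so the image of the
invariant algebra involves only monomials that are divisible by `y_z` or are `p`-th powers. The
exponents of these monomials form a monoid in which `(1, …, 1)` is irreducible: of two summands,
the one that vanishes at `z` has entries at most `1` divisible by `p`, hence is zero. The trace of
the product of all the `X_k⁺` specializes to the monomial `∏ k, y_k`, so this monomial must already
occur in the image of a generator, and the specialization does not raise degrees.
-/

section MonomialSupport

variable {σ : Type*} (R : Type*) [CommSemiring R]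

/-- The monoid algebra of `M`, viewed inside the polynomial ring: the subalgebra of polynomials
all of whose exponents lie in the additive monoid `M`. -/
def monoidSubalgebra (M : AddSubmonoid (σ →₀ ℕ)) : Subalgebra R (MvPolynomial σ R) :=
  (MvPolynomial.restrictSupport R (M : Set (σ →₀ ℕ))).toSubalgebra
    ((MvPolynomial.monomial_mem_restrictSupport R).2 (Or.inl M.zero_mem))
    fun f g hf hg => by
      rw [← AddSubmonoid.coe_add_self_eq M, MvPolynomial.restrictSupport_add]
      exact Submodule.mul_mem_mul hf hg

variable {R}

theorem mem_monoidSubalgebra {M : AddSubmonoid (σ →₀ ℕ)} {f : MvPolynomial σ R} :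
    f ∈ monoidSubalgebra R M ↔ ∀ a, f.coeff a ≠ 0 → a ∈ M := by
  simp only [← MvPolynomial.mem_support_iff]
  rfl

theorem monomial_mem_monoidSubalgebra {M : AddSubmonoid (σ →₀ ℕ)} {a : σ →₀ ℕ} (ha : a ∈ M)
    (r : R) : MvPolynomial.monomial a r ∈ monoidSubalgebra R M :=
  (MvPolynomial.monomial_mem_restrictSupport R).2 (Or.inl ha)

/-- The submonoid `M \ {m}` obtained from `M` by removing an irreducible element `m`.
Polynomials supported on `M` in which the monomial `m` does not occur thus form a subalgebra. -/
def eraseIrreducible {M : AddSubmonoid (σ →₀ ℕ)} {m : M} (hm : AddIrreducible m) :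
    AddSubmonoid (σ →₀ ℕ) where
  carrier := {a ∈ M | a ≠ m}
  zero_mem' := ⟨M.zero_mem, fun h => hm.ne_zero (Subtype.ext h.symm)⟩
  add_mem' := by
    rintro a b ⟨ha, ham⟩ ⟨hb, hbm⟩
    refine ⟨M.add_mem ha hb, fun hab => ?_⟩
    have hsum : m = ⟨a, ha⟩ + ⟨b, hb⟩ := Subtype.ext hab.symm
    rcases hm.isAddUnit_or_isAddUnit hsum with ha_unit | hb_unit
    · have ha_zero : a = 0 := isAddUnit_iff_eq_zero.1 (ha_unit.map M.subtype)
      exact hbm (by rwa [ha_zero, zero_add] at hab)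
    · have hb_zero : b = 0 := isAddUnit_iff_eq_zero.1 (hb_unit.map M.subtype)
      exact ham (by rwa [hb_zero, add_zero] at hab)

theorem exists_coeff_ne_zero_of_mem_adjoin {M : AddSubmonoid (σ →₀ ℕ)} {m : M}
    (hm : AddIrreducible m) {S : Set (MvPolynomial σ R)} (hS : S ⊆ monoidSubalgebra R M)
    {f : MvPolynomial σ R} (hf : f ∈ Algebra.adjoin R S) (hfm : f.coeff m ≠ 0) :
    ∃ g ∈ S, g.coeff m ≠ 0 := by
  by_contra! hSm
  have hle : Algebra.adjoin R S ≤ monoidSubalgebra R (eraseIrreducible hm) :=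
    Algebra.adjoin_le fun g hg => mem_monoidSubalgebra.2 fun a ha =>
      ⟨mem_monoidSubalgebra.1 (hS hg) a ha, fun ham => ha (ham ▸ hSm g hg)⟩
  exact (mem_monoidSubalgebra.1 (hle hf) m hfm).2 rfl

end MonomialSupport

section Exponents

variable {σ : Type*}

/-- The exponents `a` of the monomials that are divisible by `y_z` or are `p`-th powers; these are
the only monomials that occur in specialized invariants. -/
def divisibleOrPow (p : ℕ) (z : σ) : AddSubmonoid (σ →₀ ℕ) where
  carrier := {a | a z ≠ 0 ∨ ∀ i, p ∣ a i}
  zero_mem' := Or.inr fun _ => dvd_zero p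
  add_mem' := by
    rintro a b (ha | ha) (hb | hb)
    · exact Or.inl (by simp [ha])
    · exact Or.inl (by simp [ha])
    · exact Or.inl (by simp [hb])
    · exact Or.inr fun i => dvd_add (ha i) (hb i)

theorem eq_zero_of_mem_divisibleOrPow {p : ℕ} {z : σ} (hp : p ≠ 1) {a : σ →₀ ℕ}
    (ha : a ∈ divisibleOrPow p z) (ha_le : ∀ i, a i ≤ 1) (haz : a z = 0) : a = 0 := by
  ext i
  have hdvd : p ∣ a i := ha.resolve_left (not_not.2 haz) i
  rcases Nat.le_one_iff_eq_zero_or_eq_one.1 (ha_le i) with h | h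
  · exact h
  · exact absurd (Nat.dvd_one.1 (h ▸ hdvd)) hp

variable [Fintype σ] [DecidableEq σ]

variable (σ) in
/-- The exponent of the squarefree monomial `∏ i, y_i`. -/
def allOnes : σ →₀ ℕ := Multiset.toFinsupp Finset.univ.val

@[simp]
theorem allOnes_apply (i : σ) : allOnes σ i = 1 :=
  Multiset.count_univ i

theorem card_le_totalDegree_of_coeff_allOnes_ne_zero {R : Type*} [CommSemiring R]
    {f : MvPolynomial σ R} (hf : f.coeff (allOnes σ) ≠ 0) : Fintype.card σ ≤ f.totalDegree :=
  calc Fintype.card σ = (allOnes σ).sum fun _ e => e := (Multiset.toFinsupp_sum_eq _).symm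
    _ ≤ f.totalDegree := MvPolynomial.le_totalDegree (MvPolynomial.mem_support_iff.2 hf)

theorem allOnes_mem_divisibleOrPow (p : ℕ) (z : σ) : allOnes σ ∈ divisibleOrPow p z :=
  Or.inl (by simp)

theorem addIrreducible_allOnes {p : ℕ} (hp : p ≠ 1) (z : σ) :
    AddIrreducible (⟨allOnes σ, allOnes_mem_divisibleOrPow p z⟩ : divisibleOrPow p z) := by
  refine ⟨fun h => ?_, fun a b hab => ?_⟩
  · have hzero : allOnes σ = 0 := isAddUnit_iff_eq_zero.1 (h.map (divisibleOrPow p z).subtype)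
    simpa using DFunLike.congr_fun hzero z
  · have hsum (i : σ) : 1 = a.1 i + b.1 i := by
      simpa using DFunLike.congr_fun (congrArg Subtype.val hab) i
    have hsum_z := hsum z
    rcases Nat.eq_zero_or_pos (a.1 z) with haz | haz
    · have ha : a = 0 :=
        Subtype.ext (eq_zero_of_mem_divisibleOrPow hp a.2 (fun i => by grind) haz)
      exact Or.inl (ha ▸ isAddUnit_zero)
    · have hb : b = 0 :=
        Subtype.ext (eq_zero_of_mem_divisibleOrPow hp b.2 (fun i => by grind) (by lia))
      exact Or.inr (hb ▸ isAddUnit_zero)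

end Exponents

theorem totalDegree_aeval_le {σ τ R : Type*} [CommSemiring R] {g : σ → MvPolynomial τ R} {N : ℕ}
    (hg : ∀ i, (g i).totalDegree ≤ N) (f : MvPolynomial σ R) :
    (MvPolynomial.aeval g f).totalDegree ≤ f.totalDegree * N := by
  rw [MvPolynomial.aeval_def, MvPolynomial.eval₂_eq]
  refine MvPolynomial.totalDegree_finsetSum_le fun a ha => ?_
  calc (algebraMap R _ (f.coeff a) * ∏ i ∈ a.support, g i ^ a i).totalDegree
      ≤ (∏ i ∈ a.support, g i ^ a i).totalDegree := by
        simpa using MvPolynomial.totalDegree_mul (MvPolynomial.C (f.coeff a)) _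
    _ ≤ ∑ i ∈ a.support, (g i ^ a i).totalDegree := MvPolynomial.totalDegree_finsetProd _ _
    _ ≤ ∑ i ∈ a.support, a i * N := Finset.sum_le_sum fun i _ =>
        (MvPolynomial.totalDegree_pow _ _).trans (Nat.mul_le_mul_left _ (hg i))
    _ = (a.sum fun _ e => e) * N := (Finset.sum_mul _ _ _).symm
    _ ≤ f.totalDegree * N := Nat.mul_le_mul_right _ (MvPolynomial.le_totalDegree ha)

section WordMonomials

variable {σ R : Type*} [CommSemiring R]

theorem list_prod_X_eq_monomial [DecidableEq σ] (l : List σ) :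
    (l.map (MvPolynomial.X (R := R))).prod =
      MvPolynomial.monomial (Multiset.toFinsupp (l : Multiset σ)) 1 := by
  induction l with
  | nil => simp
  | cons k l ih =>
    rw [List.map_cons, List.prod_cons, ih, MvPolynomial.X, MvPolynomial.monomial_mul, one_mul,
      ← Multiset.cons_coe, ← Multiset.singleton_add, Multiset.toFinsupp_add,
      Multiset.toFinsupp_singleton]

theorem list_prod_X_mem_monoidSubalgebra_divisibleOrPow (p : ℕ) {z : σ} {l : List σ}
    (hz : z ∈ l) : (l.map MvPolynomial.X).prod ∈ monoidSubalgebra R (divisibleOrPow p z) := by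
  classical
  rw [list_prod_X_eq_monomial]
  have hcount : Multiset.toFinsupp (l : Multiset σ) z ≠ 0 :=
    Multiset.count_ne_zero.2 (Multiset.mem_coe.2 hz)
  exact monomial_mem_monoidSubalgebra (Or.inl hcount : _ ∈ divisibleOrPow p z) 1

theorem list_prod_X_pow_mem_monoidSubalgebra_divisibleOrPow (p : ℕ) (z : σ) (l : List σ) :
    (l.map MvPolynomial.X).prod ^ p ∈ monoidSubalgebra R (divisibleOrPow p z) := by
  classical
  rw [list_prod_X_eq_monomial, MvPolynomial.monomial_pow, one_pow]
  exact monomial_mem_monoidSubalgebra (Or.inr fun i => by simp) 1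

end WordMonomials

section Charpoly

variable {R : Type*} [CommRing R]

open Polynomial in
theorem charpoly_diagonal_ite {ι : Type*} [Fintype ι] [DecidableEq ι] (s : Finset ι) (a : R) :
    (diagonal fun i => if i ∈ s then a else 0).charpoly =
      (X - C a) ^ s.card * X ^ sᶜ.card := by
  have hfactor (i : ι) : X - C (if i ∈ s then a else 0) = if i ∈ s then X - C a else X := by
    split_ifs <;> simp
  simp [charpoly_diagonal, hfactor, Finset.prod_ite, Finset.filter_not, Finset.compl_eq_univ_sdiff]

open Polynomial in
-- By Frobenius, the polynomial is `X ^ (q + r) - C (a ^ q) * X ^ r` with `q = p ^ e`.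
theorem coeff_X_sub_C_pow_charP_mul_X_pow_mem (p : ℕ) [Fact p.Prime] [CharP R p] {B : Subring R}
    {a : R} {e : ℕ} (ha : a ^ p ^ e ∈ B) (r k : ℕ) :
    ((X - C a) ^ p ^ e * X ^ r).coeff k ∈ B := by
  rw [sub_pow_char_pow, ← C_pow, sub_mul, ← pow_add, coeff_sub, coeff_C_mul, coeff_X_pow,
    coeff_X_pow]
  refine B.sub_mem ?_ (B.mul_mem ha ?_) <;> split_ifs
  exacts [B.one_mem, B.zero_mem, B.one_mem, B.zero_mem]

end Charpoly

section Specialization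

variable {𝔽 : Type} [Field 𝔽] {n d : ℕ}

theorem map_sigmaCoeff {R : Type*} [CommRing R] [Algebra 𝔽 R] (φ : Rpoly 𝔽 n d →ₐ[𝔽] R) (t : ℕ)
    (A : Matrix (Fin n) (Fin n) (Rpoly 𝔽 n d)) :
    φ (sigmaCoeff t A) = (-1) ^ t * (A.map φ).charpoly.coeff (n - t) := by
  have hcharpoly : (A.map φ).charpoly = A.charpoly.map (φ : Rpoly 𝔽 n d →+* R) :=
    A.charpoly_map (φ : Rpoly 𝔽 n d →+* R)
  simp [sigmaCoeff, hcharpoly]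

theorem sigmaCoeff_one [NeZero n] (A : Matrix (Fin n) (Fin n) (Rpoly 𝔽 n d)) :
    sigmaCoeff 1 A = A.trace := by
  simp [sigmaCoeff, trace_eq_neg_charpoly_coeff]

/-- The substitution that turns `X_k⁺` into `y_k` times the diagonal idempotent with ones at the
positions in `D k`. -/
def diagonalSpecialization (D : Fin d → Finset (Fin n)) :
    Rpoly 𝔽 n d →ₐ[𝔽] MvPolynomial (Fin d) 𝔽 :=
  MvPolynomial.aeval fun v => if v.1 = v.2.1 ∧ v.1 ∈ D v.2.2 then MvPolynomial.X v.2.2 else 0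

theorem totalDegree_diagonalSpecialization_le (D : Fin d → Finset (Fin n)) (f : Rpoly 𝔽 n d) :
    (diagonalSpecialization D f).totalDegree ≤ f.totalDegree := by
  refine (totalDegree_aeval_le (N := 1) (fun v => ?_) f).trans_eq (mul_one _)
  split_ifs <;> simp

theorem map_diagonalSpecialization_XgenSym (D : Fin d → Finset (Fin n)) (k : Fin d) :
    (XgenSym 𝔽 n d k).map (diagonalSpecialization D) =
      diagonal fun i => if i ∈ D k then MvPolynomial.X k else 0 := by
  ext1 i j
  rcases eq_or_ne i j with rfl | hij
  · simp [XgenSym, diagonalSpecialization]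
  · by_cases hle : j ≤ i <;> simp [XgenSym, diagonalSpecialization, hij, hij.symm, hle]

/-- The positions that survive in the specialization of the word `l`: the intersection of the
`D k` for `k ∈ l`. -/
def wordSupport (D : Fin d → Finset (Fin n)) (l : List (Fin d)) : Finset (Fin n) :=
  {i | ∀ k ∈ l, i ∈ D k}

theorem map_diagonalSpecialization_word (D : Fin d → Finset (Fin n)) (l : List (Fin d)) :
    (l.map (XgenSym 𝔽 n d)).prod.map (diagonalSpecialization D) =
      diagonal fun i => if i ∈ wordSupport D l then (l.map MvPolynomial.X).prod else 0 := by
  induction l with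
  | nil => ext1 i j; simp [wordSupport, Matrix.one_apply, diagonal_apply]
  | cons k l ih =>
    rw [List.map_cons, List.prod_cons, Matrix.map_mul, ih, map_diagonalSpecialization_XgenSym,
      diagonal_mul_diagonal]
    congr! 2 with i
    by_cases hk : i ∈ D k <;> simp [wordSupport, hk]

theorem diagonalSpecialization_sigmaCoeff_mem (p : ℕ) [Fact p.Prime] [CharP 𝔽 p]
    {B : Subalgebra 𝔽 (MvPolynomial (Fin d) 𝔽)} {D : Fin d → Finset (Fin n)} {l : List (Fin d)}
    {e : ℕ} (hcard : (wordSupport D l).card = p ^ e)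
    (hB : (l.map MvPolynomial.X).prod ^ p ^ e ∈ B) (t : ℕ) :
    diagonalSpecialization D (sigmaCoeff t (l.map (XgenSym 𝔽 n d)).prod) ∈ B := by
  rw [map_sigmaCoeff, map_diagonalSpecialization_word, charpoly_diagonal_ite, hcard]
  exact B.mul_mem (B.pow_mem (B.neg_mem B.one_mem) t)
    (coeff_X_sub_C_pow_charP_mul_X_pow_mem p (B := B.toSubring) hB _ _)

theorem diagonalSpecialization_sigmaCoeff_one [NeZero n] {D : Fin d → Finset (Fin n)}
    {l : List (Fin d)} (hcard : (wordSupport D l).card = 1) :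
    diagonalSpecialization D (sigmaCoeff 1 (l.map (XgenSym 𝔽 n d)).prod) =
      (l.map MvPolynomial.X).prod := by
  rw [sigmaCoeff_one, AddMonoidHom.map_trace, map_diagonalSpecialization_word, trace_diagonal]
  simp [hcard]

end Specialization

section PointedPositions

variable {𝔽 : Type} [Field 𝔽] {n d : ℕ} {P : Finset (Fin n)} {i₀ : Fin n} {z : Fin d}
  {l : List (Fin d)}

variable (P i₀ z) in
/-- The family `D z = {i₀}` and `D k = P` for `k ≠ z`. For `i₀ ∈ P`, words containing the letter
`z` keep only the position `i₀`, and all other nonempty words keep the whole of `P`. -/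
def pointedPositions : Fin d → Finset (Fin n) :=
  Function.update (fun _ => P) z {i₀}

variable (𝔽 P i₀ z) in
/-- The specialization that sends `X_z⁺` to `y_z` times the matrix unit at `(i₀, i₀)` and every
other `X_k⁺` to `y_k` times the diagonal idempotent supported on `P`. -/
abbrev pointedSpecialization : Rpoly 𝔽 n d →ₐ[𝔽] MvPolynomial (Fin d) 𝔽 :=
  diagonalSpecialization (pointedPositions P i₀ z)

theorem wordSupport_pointedPositions_of_mem (hi₀ : i₀ ∈ P) (hz : z ∈ l) :
    wordSupport (pointedPositions P i₀ z) l = {i₀} := by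
  ext i
  simp only [wordSupport, pointedPositions, Function.update_apply]
  grind

theorem wordSupport_pointedPositions_of_notMem (hl : l ≠ []) (hz : z ∉ l) :
    wordSupport (pointedPositions P i₀ z) l = P := by
  obtain ⟨k, hk⟩ := List.exists_mem_of_ne_nil l hl
  ext i
  simp only [wordSupport, pointedPositions, Function.update_apply]
  grind

theorem pointedSpecialization_sigmaCoeff_one_finRange [NeZero n] (hi₀ : i₀ ∈ P) :
    pointedSpecialization 𝔽 P i₀ z (sigmaCoeff 1 ((List.finRange d).map (XgenSym 𝔽 n d)).prod) =
      MvPolynomial.monomial (allOnes (Fin d)) 1 := by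
  have hcard : (wordSupport (pointedPositions P i₀ z) (List.finRange d)).card = 1 := by
    simp [wordSupport_pointedPositions_of_mem hi₀ (List.mem_finRange z)]
  rw [diagonalSpecialization_sigmaCoeff_one hcard, list_prod_X_eq_monomial]
  rfl

variable (p : ℕ) [Fact p.Prime] [CharP 𝔽 p]

theorem pointedSpecialization_sigmaCoeff_mem (hP : P.card = p) (hi₀ : i₀ ∈ P) (hl : l ≠ [])
    (t : ℕ) :
    pointedSpecialization 𝔽 P i₀ z (sigmaCoeff t (l.map (XgenSym 𝔽 n d)).prod) ∈
      monoidSubalgebra 𝔽 (divisibleOrPow p z) := by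
  by_cases hz : z ∈ l
  · refine diagonalSpecialization_sigmaCoeff_mem p (e := 0) ?_ ?_ t
    · simp [wordSupport_pointedPositions_of_mem hi₀ hz]
    · simpa using list_prod_X_mem_monoidSubalgebra_divisibleOrPow p hz
  · refine diagonalSpecialization_sigmaCoeff_mem p (e := 1) ?_ ?_ t
    · simp [wordSupport_pointedPositions_of_notMem hl hz, hP]
    · simpa using list_prod_X_pow_mem_monoidSubalgebra_divisibleOrPow p z l

theorem pointedSpecialization_mem_of_mem_invOplus (hP : P.card = p) (hi₀ : i₀ ∈ P)
    {f : Rpoly 𝔽 n d} (hf : f ∈ invOplus 𝔽 n d) :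
    pointedSpecialization 𝔽 P i₀ z f ∈ monoidSubalgebra 𝔽 (divisibleOrPow p z) := by
  suffices invOplus 𝔽 n d ≤ (monoidSubalgebra 𝔽 (divisibleOrPow p z)).comap
      (pointedSpecialization 𝔽 P i₀ z) from this hf
  refine Algebra.adjoin_le ?_
  rintro _ ⟨t, -, -, w, hw, hw_sym, rfl⟩
  obtain ⟨l, rfl⟩ : w ∈ Set.range (List.map (XgenSym 𝔽 n d)) := by
    rw [Set.range_list_map]
    exact fun A hA => (hw_sym A hA).imp fun _ => Eq.symm
  exact pointedSpecialization_sigmaCoeff_mem p hP hi₀ (by simpa using hw) t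

end PointedPositions

section Degree

variable {𝔽 : Type} [Field 𝔽] {n d : ℕ}

theorem sigmaCoeff_word_mem_invOplus {t : ℕ} (ht : 1 ≤ t) (htn : t ≤ n) {l : List (Fin d)}
    (hl : l ≠ []) : sigmaCoeff t (l.map (XgenSym 𝔽 n d)).prod ∈ invOplus 𝔽 n d :=
  Algebra.subset_adjoin
    ⟨t, ht, htn, _, by simpa using hl,
      fun _ hA => (List.mem_map.1 hA).imp fun _ h => h.2.symm, rfl⟩

theorem exists_le_totalDegree_of_sigmaCoeff_one_mem_adjoin (p : ℕ) [Fact p.Prime] [CharP 𝔽 p]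
    [NeZero d] (hpn : p ≤ n) {S : Set (Rpoly 𝔽 n d)} (hS : S ⊆ invOplus 𝔽 n d)
    (htr : sigmaCoeff 1 ((List.finRange d).map (XgenSym 𝔽 n d)).prod ∈ Algebra.adjoin 𝔽 S) :
    ∃ f ∈ S, d ≤ f.totalDegree := by
  have hp : p.Prime := Fact.out
  have : NeZero n := ⟨(hp.pos.trans_le hpn).ne'⟩
  obtain ⟨P, -, hP⟩ : ∃ P ⊆ (Finset.univ : Finset (Fin n)), P.card = p :=
    Finset.exists_subset_card_eq (by simpa using hpn)
  obtain ⟨i₀, hi₀⟩ : P.Nonempty := Finset.card_pos.1 (hP ▸ hp.pos)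
  have hS_image : pointedSpecialization 𝔽 P i₀ 0 '' S ⊆
      monoidSubalgebra 𝔽 (divisibleOrPow p (0 : Fin d)) := by
    rintro _ ⟨f, hf, rfl⟩
    exact pointedSpecialization_mem_of_mem_invOplus p hP hi₀ (hS hf)
  have hmonomial : MvPolynomial.monomial (allOnes (Fin d)) 1 ∈
      Algebra.adjoin 𝔽 (pointedSpecialization 𝔽 P i₀ 0 '' S) := by
    rw [← pointedSpecialization_sigmaCoeff_one_finRange hi₀, Algebra.adjoin_image]
    exact ⟨_, htr, rfl⟩
  obtain ⟨_, ⟨f, hf, rfl⟩, hcoeff⟩ := exists_coeff_ne_zero_of_mem_adjoin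
    (addIrreducible_allOnes hp.ne_one 0) hS_image hmonomial (by simp)
  refine ⟨f, hf, ?_⟩
  calc d = Fintype.card (Fin d) := (Fintype.card_fin d).symm
    _ ≤ (pointedSpecialization 𝔽 P i₀ 0 f).totalDegree :=
        card_le_totalDegree_of_coeff_allOnes_ne_zero hcoeff
    _ ≤ f.totalDegree := totalDegree_diagonalSpecialization_le _ f

end Degree

theorem invOplus_generating_set_degree_ge_general
    (𝔽 : Type) [Field 𝔽] (n d : ℕ) (hd : 1 ≤ d)
    (hp0 : 0 < ringChar 𝔽) (hpn : ringChar 𝔽 ≤ n)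
    (S : Set (Rpoly 𝔽 n d)) (hgen : Algebra.adjoin 𝔽 S = invOplus 𝔽 n d) :
    ∃ f ∈ S, d ≤ f.totalDegree := by
  have : NeZero d := NeZero.of_pos hd
  have : Fact (ringChar 𝔽).Prime := ⟨CharP.char_prime_of_ne_zero 𝔽 hp0.ne'⟩
  refine exists_le_totalDegree_of_sigmaCoeff_one_mem_adjoin (ringChar 𝔽) hpn
    (hgen ▸ Algebra.subset_adjoin) ?_
  rw [hgen]
  exact sigmaCoeff_word_mem_invOplus le_rfl (hp0.trans_le hpn) (by simp [NeZero.ne d])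

theorem invOplus_generating_set_degree_ge
    (𝔽 : Type) [Field 𝔽] [Infinite 𝔽] (n d : ℕ) (hn : 2 ≤ n) (hd : 1 ≤ d)
    (hp0 : 0 < ringChar 𝔽) (hpn : ringChar 𝔽 ≤ n) (hp2 : ringChar 𝔽 ≠ 2)
    (S : Set (Rpoly 𝔽 n d)) (hhom : ∀ f ∈ S, ∃ k, MvPolynomial.IsHomogeneous f k)
    (hgen : Algebra.adjoin 𝔽 S = invOplus 𝔽 n d) :
    ∃ f ∈ S, d ≤ f.totalDegree :=
  invOplus_generating_set_degree_ge_general 𝔽 n d hd hp0 hpn S hgen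

end
end

section
/- Let 𝔽 be an infinite field of characteristic p with 0 < p ≤ n and p ≠ 2, and let d ≥ 1. Then the invariant tr((X₁ + X₁ᵀ)(X₂ + X₂ᵀ) ⋯ (X_d + X_dᵀ)) is indecomposable in R^{O(n)}; that is, it does not lie in the 𝔽-span of products g·h with g, h ∈ R^{O(n)} homogeneous of positive degree. -/
open Matrix
noncomputable section

/-!
Specialise `X₁ ↦ ε₁E` and `X_k ↦ ε_kP` for `k ≥ 2`, where the scalars satisfy `ε_k² = 0`, `P` is a
diagonal projection of rank `p` and `E` is a diagonal projection of rank one below `P`. The trace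
becomes `2^d ε₁ ⋯ ε_d`, which is nonzero. A word avoiding `X₁` becomes `cP` with `c² = 0`, so its
`σ_t` vanish: for `t ≥ 2` because they are multiples of `c^t`, and for `t = 1` because
`tr P = p = 0`. Hence every invariant of positive degree becomes a multiple of `ε₁`, and the product
of two such invariants becomes zero.
-/

/-- The algebra `K[ε_i : i ∈ ι] / (ε_i²)`, a version of the dual numbers with several
infinitesimals. -/
abbrev MultiDual (ι K : Type*) [CommRing K] : Type _ :=
  MvPolynomial ι K ⧸ Ideal.span
    ((fun s ↦ MvPolynomial.monomial s (1 : K)) '' Set.range fun i : ι ↦ Finsupp.single i 2)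

namespace MultiDual

variable {ι K : Type*} [CommRing K]

/-- The infinitesimal `ε_i`. -/
def ε (i : ι) : MultiDual ι K := Ideal.Quotient.mk _ (MvPolynomial.X i)

theorem ε_sq (i : ι) : (ε i : MultiDual ι K) ^ 2 = 0 := by
  rw [ε, ← map_pow, Ideal.Quotient.eq_zero_iff_mem, MvPolynomial.X_pow_eq_monomial]
  exact Ideal.subset_span ⟨_, ⟨i, rfl⟩, rfl⟩

theorem prod_ε_ne_zero [Fintype ι] [Nontrivial K] : ∏ i, (ε i : MultiDual ι K) ≠ 0 := by
  classical
  have prod_X : ∏ i, (MvPolynomial.X i : MvPolynomial ι K) =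
      MvPolynomial.monomial (∑ i, Finsupp.single i 1) 1 :=
    (MvPolynomial.monomial_sum_one _ _).symm
  simp only [ε]
  rw [← map_prod, prod_X, Ne, Ideal.Quotient.eq_zero_iff_mem,
    MvPolynomial.mem_ideal_span_monomial_image]
  intro divisible
  obtain ⟨_, ⟨i, rfl⟩, single_le⟩ := divisible _ (by
    rw [MvPolynomial.support_monomial, if_neg one_ne_zero]
    exact Finset.mem_singleton_self _)
  simpa [Finsupp.finsetSum_apply, Finsupp.single_apply] using single_le i

end MultiDual

section CoordProj

variable {m : Type*} [DecidableEq m] (S : Type*) [Semiring S]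

/-- The diagonal projection onto the coordinates in `s`. -/
def coordProj (s : Finset m) : Matrix m m S :=
  diagonal fun i ↦ if i ∈ s then 1 else 0

theorem transpose_coordProj (s : Finset m) : (coordProj S s)ᵀ = coordProj S s :=
  diagonal_transpose _

variable [Fintype m]

theorem coordProj_mul_coordProj (s t : Finset m) :
    coordProj S s * coordProj S t = coordProj S (s ∩ t) := by
  simp only [coordProj, diagonal_mul_diagonal, Finset.mem_inter, ite_and, ite_mul, one_mul,
    zero_mul]

theorem isIdempotentElem_coordProj (s : Finset m) : IsIdempotentElem (coordProj S s) := by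
  rw [IsIdempotentElem, coordProj_mul_coordProj, Finset.inter_self]

theorem trace_coordProj (s : Finset m) : (coordProj S s).trace = s.card := by
  simp [coordProj, trace_diagonal]

end CoordProj

theorem list_prod_map_smul {ι S M : Type*} [CommSemiring S] [Semiring M] [Algebra S M] (l : List ι)
    (c : ι → S) (D : ι → M) :
    (l.map fun i ↦ c i • D i).prod = (l.map c).prod • (l.map D).prod := by
  induction l with
  | nil => simp
  | cons i l ih => simp only [List.map_cons, List.prod_cons, ih, smul_mul_smul_comm]

theorem trace_prod_ofFn_smul_cons {n S : Type*} [Fintype n] [DecidableEq n] [CommSemiring S] {m : ℕ}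
    (e : Fin (m + 1) → S) {E P : Matrix n n S} (hEP : E * P = E) :
    (List.ofFn fun k ↦ e k • (Fin.cons E fun _ ↦ P : Fin (m + 1) → _) k).prod.trace =
      (∏ k, e k) * E.trace := by
  have mul_pow (r : ℕ) : E * P ^ r = E := by
    induction r with
    | zero => rw [pow_zero, mul_one]
    | succ r ih => rw [pow_succ, ← mul_assoc, ih, hEP]
  rw [List.ofFn_eq_map, list_prod_map_smul, ← List.ofFn_eq_map, ← List.ofFn_eq_map,
    List.prod_ofFn, List.ofFn_succ, List.prod_cons]
  simp only [Fin.cons_zero, Fin.cons_succ, List.ofFn_const, List.prod_replicate, mul_pow,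
    trace_smul, smul_eq_mul]

theorem map_mem_ideal_of_mem_adjoin {σ K S : Type*} [CommRing K] [CommRing S] [Algebra K S]
    (φ : MvPolynomial σ K →ₐ[K] S) (I : Ideal S) {s : Set (MvPolynomial σ K)}
    (constantCoeff_eq_zero : ∀ f ∈ s, MvPolynomial.constantCoeff f = 0) (map_mem : ∀ f ∈ s, φ f ∈ I)
    {g : MvPolynomial σ K} (hg : g ∈ Algebra.adjoin K s)
    (hg0 : MvPolynomial.constantCoeff g = 0) : φ g ∈ I := by
  have eqOn : s.EqOn ((Ideal.Quotient.mkₐ K I).comp φ) (MvPolynomial.aeval 0) := fun f hf ↦ by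
    rw [AlgHom.comp_apply, Ideal.Quotient.mkₐ_eq_mk,
      Ideal.Quotient.eq_zero_iff_mem.2 (map_mem f hf), MvPolynomial.aeval_zero,
      constantCoeff_eq_zero f hf, map_zero]
  have hg_eq : Ideal.Quotient.mk I (φ g) = MvPolynomial.aeval 0 g :=
    AlgHom.adjoin_le_equalizer _ _ eqOn hg
  rw [← Ideal.Quotient.eq_zero_iff_mem, hg_eq, MvPolynomial.aeval_zero, hg0, map_zero]

section Invariants

variable {𝔽 : Type} [Field 𝔽] {n d : ℕ}

/-- A nonempty word in the generic matrices and their transposes, as in the definition of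
`invO`. -/
def IsGenericWord (w : List (Matrix (Fin n) (Fin n) (Rpoly 𝔽 n d))) : Prop :=
  w ≠ [] ∧ ∀ A ∈ w, (∃ k, A = Xgen 𝔽 n d k) ∨ (∃ k, A = (Xgen 𝔽 n d k)ᵀ)

variable {S : Type*} [CommRing S]

theorem map_sigmaCoeff_eq (φ : Rpoly 𝔽 n d →+* S) (t : ℕ)
    (A : Matrix (Fin n) (Fin n) (Rpoly 𝔽 n d)) :
    φ (sigmaCoeff t A) = (-1) ^ t * (A.map φ).charpoly.coeff (n - t) := by
  rw [sigmaCoeff, charpoly_map, Polynomial.coeff_map, map_mul, map_pow, map_neg, map_one]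

theorem map_sigmaCoeff_mem_pow (φ : Rpoly 𝔽 n d →+* S) {I : Ideal S} {t : ℕ} (ht : t ≤ n)
    {A : Matrix (Fin n) (Fin n) (Rpoly 𝔽 n d)} (hA : ∀ i j, A.map φ i j ∈ I) :
    φ (sigmaCoeff t A) ∈ I ^ t := by
  rw [map_sigmaCoeff_eq]
  have mem_pow := coeff_charpoly_mem_ideal_pow hA (n - t)
  rw [Fintype.card_fin, Nat.sub_sub_self ht] at mem_pow
  exact Ideal.mul_mem_left _ _ mem_pow

theorem map_sigmaCoeff_one (φ : Rpoly 𝔽 n d →+* S) (hn : 1 ≤ n)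
    (A : Matrix (Fin n) (Fin n) (Rpoly 𝔽 n d)) : φ (sigmaCoeff 1 A) = (A.map φ).trace := by
  have : Nonempty (Fin n) := ⟨⟨0, hn⟩⟩
  rw [map_sigmaCoeff_eq, trace_eq_neg_charpoly_coeff, Fintype.card_fin, pow_one, neg_one_mul]

theorem constantCoeff_sigmaCoeff_prod {t : ℕ} (ht : 1 ≤ t) (htn : t ≤ n)
    {w : List (Matrix (Fin n) (Fin n) (Rpoly 𝔽 n d))} (hw : IsGenericWord w) :
    MvPolynomial.constantCoeff (sigmaCoeff t w.prod) = 0 := by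
  have map_prod_eq_zero : w.prod.map (MvPolynomial.constantCoeff (R := 𝔽)) = 0 := by
    obtain ⟨A, hA⟩ := List.exists_mem_of_ne_nil w hw.1
    refine (map_list_prod (MvPolynomial.constantCoeff (R := 𝔽)).mapMatrix w).trans
      (List.prod_eq_zero (List.mem_map.2 ⟨A, hA, ?_⟩))
    rcases hw.2 A hA with ⟨k, rfl⟩ | ⟨k, rfl⟩ <;> ext i j <;> simp [Xgen]
  have mem_bot := map_sigmaCoeff_mem_pow (I := ⊥) MvPolynomial.constantCoeff htn (A := w.prod)
    fun i j ↦ by rw [map_prod_eq_zero]; exact Ideal.zero_mem _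
  exact Ideal.pow_le_self (by lia) mem_bot

theorem map_sigmaCoeff_eq_zero_of_sq_eq_zero_of_trace_eq_zero (φ : Rpoly 𝔽 n d →+* S) {t : ℕ}
    (ht : 1 ≤ t) (htn : t ≤ n) {A : Matrix (Fin n) (Fin n) (Rpoly 𝔽 n d)} {c : S}
    {P : Matrix (Fin n) (Fin n) S} (hA : A.map φ = c • P) (hc : c ^ 2 = 0) (hP : P.trace = 0) :
    φ (sigmaCoeff t A) = 0 := by
  rcases ht.eq_or_lt with rfl | two_le
  · rw [map_sigmaCoeff_one φ htn, hA, trace_smul, hP, smul_zero]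
  · have mem_pow := map_sigmaCoeff_mem_pow (I := Ideal.span {c}) φ htn (A := A) fun i j ↦ by
      rw [hA, Matrix.smul_apply, smul_eq_mul]
      exact Ideal.mul_mem_right _ _ (Ideal.mem_span_singleton_self c)
    rwa [Ideal.span_singleton_pow, pow_eq_zero_of_le two_le hc, Ideal.mem_span_singleton,
      zero_dvd_iff] at mem_pow

variable [Algebra 𝔽 S]

theorem map_mem_ideal_of_mem_invO (φ : Rpoly 𝔽 n d →ₐ[𝔽] S) (I : Ideal S)
    (map_sigmaCoeff_mem : ∀ t w, 1 ≤ t → t ≤ n → IsGenericWord w → φ (sigmaCoeff t w.prod) ∈ I)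
    {g : Rpoly 𝔽 n d} (hg : g ∈ invO 𝔽 n d) {i : ℕ} (hi : 0 < i) (hgi : g.IsHomogeneous i) :
    φ g ∈ I := by
  refine map_mem_ideal_of_mem_adjoin φ I ?_ ?_ hg ?_
  · rintro _ ⟨t, ht, htn, w, hw, hwX, rfl⟩
    exact constantCoeff_sigmaCoeff_prod ht htn ⟨hw, hwX⟩
  · rintro _ ⟨t, ht, htn, w, hw, hwX, rfl⟩
    exact map_sigmaCoeff_mem t w ht htn ⟨hw, hwX⟩
  · rw [MvPolynomial.constantCoeff_eq]
    exact hgi.coeff_eq_zero (by simpa using hi.ne)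

theorem Decomposable.map_eq_zero {A : Subalgebra 𝔽 (Rpoly 𝔽 n d)} {f : Rpoly 𝔽 n d}
    (hf : Decomposable 𝔽 A f) (φ : Rpoly 𝔽 n d →ₐ[𝔽] S) {I : Ideal S} (hI : I * I = ⊥)
    (map_mem : ∀ g ∈ A, ∀ i, 0 < i → g.IsHomogeneous i → φ g ∈ I) : φ f = 0 := by
  suffices span_le : Submodule.span 𝔽 _ ≤ LinearMap.ker φ.toLinearMap from span_le hf
  rw [Submodule.span_le]
  rintro _ ⟨g, hg, h, hh, ⟨i, hi, hgi⟩, ⟨j, hj, hhj⟩, rfl⟩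
  have mul_mem := Ideal.mul_mem_mul (map_mem g hg i hi hgi) (map_mem h hh j hj hhj)
  rw [hI, Ideal.mem_bot] at mul_mem
  exact (map_mul φ g h).trans mul_mem

/-- The specialisation `X_k ↦ M_k` of the generic matrices. -/
def specialization (𝔽 : Type) [Field 𝔽] [Algebra 𝔽 S] (M : Fin d → Matrix (Fin n) (Fin n) S) :
    Rpoly 𝔽 n d →ₐ[𝔽] S :=
  MvPolynomial.aeval fun q ↦ M q.2.2 q.1 q.2.1

theorem map_specialization_Xgen (M : Fin d → Matrix (Fin n) (Fin n) S) (k : Fin d) :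
    (Xgen 𝔽 n d k).map (specialization 𝔽 M) = M k := by
  ext i j
  simp [Xgen, specialization]

theorem map_specialization_transpose_Xgen (M : Fin d → Matrix (Fin n) (Fin n) S) (k : Fin d) :
    (Xgen 𝔽 n d k)ᵀ.map (specialization 𝔽 M) = (M k)ᵀ := by
  rw [transpose_map, map_specialization_Xgen]

theorem IsGenericWord.exists_map_specialization_prod_eq
    {w : List (Matrix (Fin n) (Fin n) (Rpoly 𝔽 n d))} (hw : IsGenericWord w)
    {M : Fin d → Matrix (Fin n) (Fin n) S} (hM : ∀ k, (M k)ᵀ = M k) :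
    ∃ l : List (Fin d), l ≠ [] ∧ w.prod.map (specialization 𝔽 M) = (l.map M).prod := by
  have mem_range : ∀ A ∈ w.map (specialization 𝔽 M).mapMatrix, A ∈ Set.range M := by
    simp only [List.mem_map, forall_exists_index, and_imp, forall_apply_eq_imp_iff₂]
    intro A hA
    rcases hw.2 A hA with ⟨k, rfl⟩ | ⟨k, rfl⟩
    · exact ⟨k, (map_specialization_Xgen M k).symm⟩
    · exact ⟨k, (map_specialization_transpose_Xgen M k |>.trans (hM k)).symm⟩
  obtain ⟨l, hl⟩ : w.map (specialization 𝔽 M).mapMatrix ∈ Set.range (List.map M) := by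
    rwa [Set.range_list_map]
  refine ⟨l, ?_, hl ▸ map_list_prod (specialization 𝔽 M).mapMatrix w⟩
  rintro rfl
  exact hw.1 (List.map_eq_nil_iff.1 hl.symm)

theorem specialization_smul_sigmaCoeff_mem {e : Fin d → S} (he : ∀ k, e k ^ 2 = 0)
    {D : Fin d → Matrix (Fin n) (Fin n) S} (hD : ∀ k, (D k)ᵀ = D k)
    {P : Matrix (Fin n) (Fin n) S} (hP : IsIdempotentElem P) (trace_P : P.trace = 0) {k₀ : Fin d}
    (D_eq : ∀ k ≠ k₀, D k = P) {t : ℕ} (ht : 1 ≤ t) (htn : t ≤ n)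
    {w : List (Matrix (Fin n) (Fin n) (Rpoly 𝔽 n d))} (hw : IsGenericWord w) :
    specialization 𝔽 (fun k ↦ e k • D k) (sigmaCoeff t w.prod) ∈ Ideal.span {e k₀} := by
  obtain ⟨l, hl, map_prod⟩ := hw.exists_map_specialization_prod_eq (M := fun k ↦ e k • D k)
    fun k ↦ by rw [transpose_smul, hD]
  rw [list_prod_map_smul] at map_prod
  by_cases hk₀ : k₀ ∈ l
  · refine Ideal.pow_le_self (by lia)
      (map_sigmaCoeff_mem_pow (specialization 𝔽 fun k ↦ e k • D k).toRingHom htn fun i j ↦ ?_)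
    have e_dvd : e k₀ ∣ (l.map e).prod := List.dvd_prod (List.mem_map_of_mem hk₀)
    exact Ideal.mem_span_singleton.2 (congrFun₂ map_prod i j ▸ e_dvd.mul_right _)
  · have prod_D : (l.map D).prod = P := by
      rw [List.map_congr_left (g := fun _ ↦ P) fun k hk ↦ D_eq k fun h ↦ hk₀ (h ▸ hk),
        List.map_const', List.prod_replicate, hP.pow_eq (by simpa using hl)]
    have sq_eq_zero : (l.map e).prod ^ 2 = 0 := by
      obtain ⟨k, hk⟩ := List.exists_mem_of_ne_nil l hl
      exact zero_dvd_iff.1 (he k ▸ pow_dvd_pow_of_dvd (List.dvd_prod (List.mem_map_of_mem hk)) 2)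
    rw [prod_D] at map_prod
    have map_eq_zero := map_sigmaCoeff_eq_zero_of_sq_eq_zero_of_trace_eq_zero
      (specialization 𝔽 fun k ↦ e k • D k).toRingHom ht htn map_prod sq_eq_zero trace_P
    exact map_eq_zero ▸ Ideal.zero_mem _

theorem specialization_smul_eq_zero_of_decomposable {e : Fin d → S} (he : ∀ k, e k ^ 2 = 0)
    {D : Fin d → Matrix (Fin n) (Fin n) S} (hD : ∀ k, (D k)ᵀ = D k)
    {P : Matrix (Fin n) (Fin n) S} (hP : IsIdempotentElem P) (trace_P : P.trace = 0) {k₀ : Fin d}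
    (D_eq : ∀ k ≠ k₀, D k = P) {f : Rpoly 𝔽 n d} (hf : Decomposable 𝔽 (invO 𝔽 n d) f) :
    specialization 𝔽 (fun k ↦ e k • D k) f = 0 := by
  have span_mul_span : Ideal.span {e k₀} * Ideal.span {e k₀} = ⊥ := by
    rw [← sq, Ideal.span_singleton_pow, he, Ideal.span_singleton_eq_bot]
  refine hf.map_eq_zero _ span_mul_span fun g hg _ ↦ map_mem_ideal_of_mem_invO _ _ ?_ hg
  exact fun _ _ ht htn ↦ specialization_smul_sigmaCoeff_mem he hD hP trace_P D_eq ht htn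

theorem specialization_trace_prod_Xgen_add_transpose {M : Fin d → Matrix (Fin n) (Fin n) S}
    (hM : ∀ k, (M k)ᵀ = M k) :
    specialization 𝔽 M (trace (List.ofFn fun k ↦ Xgen 𝔽 n d k + (Xgen 𝔽 n d k)ᵀ).prod) =
      2 ^ d * (List.ofFn M).prod.trace := by
  have map_factor (k : Fin d) :
      (specialization 𝔽 M).mapMatrix (Xgen 𝔽 n d k + (Xgen 𝔽 n d k)ᵀ) = (2 : S) • M k := by
    rw [map_add, AlgHom.mapMatrix_apply, AlgHom.mapMatrix_apply, map_specialization_Xgen,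
      map_specialization_transpose_Xgen, hM, two_smul]
  have map_prod : (specialization 𝔽 M).mapMatrix
      (List.ofFn fun k ↦ Xgen 𝔽 n d k + (Xgen 𝔽 n d k)ᵀ).prod =
        (2 ^ d : S) • (List.ofFn M).prod := by
    rw [map_list_prod, List.map_ofFn, List.ofFn_eq_map, List.ofFn_eq_map]
    simp only [Function.comp_def, map_factor, list_prod_map_smul, List.map_const',
      List.prod_replicate, List.length_finRange]
  rw [AddMonoidHom.map_trace, ← smul_eq_mul, ← trace_smul, ← map_prod]
  rfl

end Invariants

theorem trace_prod_sum_transpose_indecomposable_general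
    (𝔽 : Type) [Field 𝔽] (n d : ℕ) (hd : 1 ≤ d)
    (hp0 : 0 < ringChar 𝔽) (hpn : ringChar 𝔽 ≤ n) (hp2 : ringChar 𝔽 ≠ 2) :
    ¬ Decomposable 𝔽 (invO 𝔽 n d)
      (Matrix.trace (List.ofFn (fun k : Fin d =>
        Xgen 𝔽 n d k + (Xgen 𝔽 n d k)ᵀ)).prod) := by
  intro decomposable
  obtain ⟨m, rfl⟩ := Nat.exists_eq_add_of_le' hd
  obtain ⟨s, -, card_s⟩ := Finset.exists_subset_card_eq (s := (Finset.univ : Finset (Fin n)))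
    (by simpa using hpn)
  obtain ⟨i, hi⟩ := Finset.card_pos.1 (card_s ▸ hp0)
  let S := MultiDual (Fin (m + 1)) 𝔽
  let P := coordProj S s
  let E := coordProj S {i}
  let D : Fin (m + 1) → Matrix (Fin n) (Fin n) S := Fin.cons E fun _ ↦ P
  have hD (k) : (D k)ᵀ = D k := by cases k using Fin.cases <;> exact transpose_coordProj S _
  have trace_P : P.trace = 0 := by
    rw [trace_coordProj, card_s, ← map_natCast (algebraMap 𝔽 S), ringChar.Nat.cast_ringChar,
      map_zero]
  have hEP : E * P = E := by
    rw [coordProj_mul_coordProj, Finset.singleton_inter_of_mem hi]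
  have vanishes := specialization_smul_eq_zero_of_decomposable (D := D) MultiDual.ε_sq hD
    (isIdempotentElem_coordProj S s) trace_P (k₀ := 0) (Fin.cases (absurd rfl) fun _ _ ↦ rfl)
    decomposable
  rw [specialization_trace_prod_Xgen_add_transpose fun k ↦ by rw [transpose_smul, hD],
    trace_prod_ofFn_smul_cons _ hEP, trace_coordProj, Finset.card_singleton, Nat.cast_one,
    mul_one] at vanishes
  have isUnit_two : IsUnit (2 : S) := by
    simpa only [map_ofNat] using (IsUnit.mk0 _ (Ring.two_ne_zero hp2)).map (algebraMap 𝔽 S)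
  exact MultiDual.prod_ε_ne_zero ((isUnit_two.pow _).mul_right_eq_zero.1 vanishes)

theorem trace_prod_sum_transpose_indecomposable
    (𝔽 : Type) [Field 𝔽] [Infinite 𝔽] (n d : ℕ) (hn : 2 ≤ n) (hd : 1 ≤ d)
    (hp0 : 0 < ringChar 𝔽) (hpn : ringChar 𝔽 ≤ n) (hp2 : ringChar 𝔽 ≠ 2) :
    ¬ Decomposable 𝔽 (invO 𝔽 n d)
      (Matrix.trace (List.ofFn (fun k : Fin d =>
        Xgen 𝔽 n d k + (Xgen 𝔽 n d k)ᵀ)).prod) :=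
  trace_prod_sum_transpose_indecomposable_general 𝔽 n d hd hp0 hpn hp2

end
end
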